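/- The polynomial z⁶ − z⁴ − 2z³ − z² + 1 has exactly one real root x with x > 1, and this root satisfies 1.582 < x < 1.583. -/

import Mathlib

/-!
The polynomial `p(x) = x⁶ - x⁴ - 2x³ - x² + 1` is palindromic: with `t = x + 1/x` one has
`p(x) = x³ (t³ - 4t - 2)`. On `x > 1` the map `x ↦ x + 1/x` is strictly increasing with values
above `2`, where `t³ - 4t - 2` is strictly increasing. Hence `p(x) / x³` is strictly increasing
on `(1, ∞)`, and the sign change of `p` between `1.582` and `1.583` locates its only zero there.
-/

/-- The quotient `p(x) / x³`, written in terms of `t = x + 1/x`. -/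
noncomputable def reducedPoly (x : ℝ) : ℝ := (x + x⁻¹) ^ 3 - 4 * (x + x⁻¹) - 2

lemma poly_eq_cube_mul_reducedPoly {x : ℝ} (hx : 1 < x) :
    x ^ 6 - x ^ 4 - 2 * x ^ 3 - x ^ 2 + 1 = x ^ 3 * reducedPoly x := by
  have : x ≠ 0 := by positivity
  unfold reducedPoly
  field_simp
  ring

lemma poly_eq_zero_iff {x : ℝ} (hx : 1 < x) :
    x ^ 6 - x ^ 4 - 2 * x ^ 3 - x ^ 2 + 1 = 0 ↔ reducedPoly x = 0 := by
  have : x ≠ 0 := by positivity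
  rw [poly_eq_cube_mul_reducedPoly hx]
  simp [this]

lemma two_lt_add_inv {x : ℝ} (hx : 1 < x) : 2 < x + x⁻¹ := by
  have h0 : 0 < x := by positivity
  have h : x + x⁻¹ - 2 = (x - 1) ^ 2 / x := by field_simp; ring
  have : 0 < (x - 1) ^ 2 / x := div_pos (pow_pos (sub_pos.2 hx) 2) h0
  linarith

lemma add_inv_lt_add_inv {x y : ℝ} (hx : 1 < x) (hxy : x < y) : x + x⁻¹ < y + y⁻¹ := by
  have h0 : 0 < x := by positivity
  have h1 : 0 < y := h0.trans hxy
  have h : y + y⁻¹ - (x + x⁻¹) = (y - x) * (x * y - 1) / (x * y) := by field_simp; ring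
  have : 0 < (y - x) * (x * y - 1) / (x * y) :=
    div_pos (mul_pos (sub_pos.2 hxy) (by nlinarith)) (mul_pos h0 h1)
  linarith

lemma reducedPoly_strictMonoOn : StrictMonoOn reducedPoly (Set.Ioi 1) := by
  intro x hx y _ hxy
  have h2 := two_lt_add_inv hx
  have hlt := add_inv_lt_add_inv hx hxy
  unfold reducedPoly
  generalize x + x⁻¹ = s at *
  generalize y + y⁻¹ = t at *
  -- `t³ - 4t - (s³ - 4s) = (t - s) (t² + ts + s² - 4)`
  have : 0 < (t - s) * (t ^ 2 + t * s + s ^ 2 - 4) :=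
    mul_pos (sub_pos.2 hlt) (by nlinarith)
  linarith

theorem stmt_8 :
    (∃! x : ℝ, 1 < x ∧ x ^ 6 - x ^ 4 - 2 * x ^ 3 - x ^ 2 + 1 = 0) ∧
    (∀ x : ℝ, 1 < x → x ^ 6 - x ^ 4 - 2 * x ^ 3 - x ^ 2 + 1 = 0 →
      1.582 < x ∧ x < 1.583) := by
  have hlo : reducedPoly 1.582 < 0 := by norm_num [reducedPoly]
  have hhi : 0 < reducedPoly 1.583 := by norm_num [reducedPoly]
  have hmono := reducedPoly_strictMonoOn
  refine ⟨?_, fun x hx h => ?_⟩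
  · have hc : ContinuousOn (fun x : ℝ => x ^ 6 - x ^ 4 - 2 * x ^ 3 - x ^ 2 + 1)
        (Set.Icc 1.582 1.583) := by fun_prop
    obtain ⟨x, hx, h⟩ := intermediate_value_Icc (by norm_num) hc
      (show (0 : ℝ) ∈ _ by constructor <;> norm_num)
    have hx1 : 1 < x := lt_of_lt_of_le (by norm_num) hx.1
    refine ⟨x, ⟨hx1, h⟩, fun y ⟨hy1, hy⟩ => hmono.injOn hy1 hx1 ?_⟩
    rw [(poly_eq_zero_iff hy1).1 hy, (poly_eq_zero_iff hx1).1 h]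
  · rw [poly_eq_zero_iff hx] at h
    constructor
    · refine (hmono.lt_iff_lt (by norm_num) hx).1 ?_
      rwa [h]
    · refine (hmono.lt_iff_lt hx (by norm_num)).1 ?_
      rwa [h]
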